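/- Let N(n,n) denote the number of perfect matchings of the n-by-n grid graph, for n even. Then as n → ∞ along even integers, (1/n²) · log N(n,n) converges to G/π, where G = ∑_{k=0}^{∞} (−1)^k/(2k+1)² is Catalan's constant; in other words, the number of domino tilings of the n-by-n board grows like e^{(G/π) n²} ≈ 1.34^{n²}. -/

import Mathlib

open Real Filter

/-- The m-by-n grid graph on vertex set `Fin m × Fin n`: two vertices are
adjacent iff they differ by exactly 1 in one coordinate and agree in the other. -/
def gridGraph (m n : ℕ) : SimpleGraph (Fin m × Fin n) :=
  SimpleGraph.fromRel (fun p q =>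
    (p.1 = q.1 ∧ p.2.val + 1 = q.2.val) ∨ (p.2 = q.2 ∧ p.1.val + 1 = q.1.val))

/-- The number of perfect matchings of a graph. -/
noncomputable def numPerfectMatchings {V : Type*} (G : SimpleGraph V) : ℕ :=
  {M : G.Subgraph | M.IsPerfectMatching}.ncard

/-- Catalan's constant G = ∑_{k=0}^∞ (-1)^k / (2k+1)². -/
noncomputable def catalanConstant : ℝ := ∑' k : ℕ, (-1 : ℝ) ^ k / (2 * k + 1) ^ 2

/-!
Kasteleyn's method. Give the edges of the grid signs such that the two matchings of every unit
square contribute opposite signs, and let `K` be the signed adjacency matrix. The nonzero terms of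
the Leibniz expansion of `det K` belong to the permutations moving every vertex to a neighbour; by
the checkerboard colouring these correspond to pairs of perfect matchings. Rotating two dominoes of
a 2-by-2 square does not change the term, and any two tilings are connected by such flips, so all
terms are equal to the same sign and `|det K| = N²`.

Since `K = 1 ⊗ Q + A ⊗ 1` with `A` the adjacency matrix of a path, the sine eigenvectors of `A` give
`det K = ∏ det (2 cos θ + Q)`, `θ` running over the multiples of `π / (n + 1)` in `(0, π)`. Writing
`cos θ = sinh u`, each factor is `cosh ((n + 1) u) / cosh u`, which is `exp (n |u|)` up to a factor
of at most 2. So `2 log N / n²` is asymptotically a Riemann sum for the mean of `|arsinh (cos θ)|`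
over `[0, π]`, and this mean is `2 G / π` because Fubini's theorem turns `∫ arsinh (cos x)` over
`[0, π / 2]` into `∫ arctan t / t` over `[0, 1]`, which the arctangent series evaluates to `G`.
-/

namespace DominoTiling

section Kasteleyn

open Equiv

variable {V : Type*} {G : SimpleGraph V}

/-- The perfect matchings of `G`, each encoded as the involution of the vertices that exchanges the
endpoints of every edge of the matching. -/
def Pairing (G : SimpleGraph V) : Type _ :=
  {τ : Perm V // Function.Involutive τ ∧ ∀ v, G.Adj v (τ v)}

namespace Pairing

instance [Finite V] : Finite (Pairing G) := Subtype.finite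

instance : CoeFun (Pairing G) fun _ => V → V := ⟨fun τ => τ.1⟩

@[ext] theorem ext {τ ρ : Pairing G} (h : ∀ v, τ v = ρ v) : τ = ρ :=
  Subtype.ext (Equiv.ext h)

theorem apply_apply (τ : Pairing G) (v : V) : τ (τ v) = v := τ.2.1 v

theorem adj (τ : Pairing G) (v : V) : G.Adj v (τ v) := τ.2.2 v

/-- The subgraph formed by the edges of a matching. -/
def toSubgraph (τ : Pairing G) : G.Subgraph where
  verts := Set.univ
  Adj v w := τ v = w
  adj_sub := by rintro v _ rfl; exact τ.adj v
  edge_vert _ := Set.mem_univ _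
  symm := ⟨by rintro v _ rfl; exact τ.apply_apply v⟩

theorem isPerfectMatching_toSubgraph (τ : Pairing G) : τ.toSubgraph.IsPerfectMatching :=
  SimpleGraph.Subgraph.isPerfectMatching_iff.2 fun v => ⟨τ v, rfl, fun _ h => Eq.symm h⟩

theorem toSubgraph_injective : Function.Injective (toSubgraph (G := G)) := fun _ ρ h =>
  ext fun v => (congrArg (fun M : G.Subgraph => M.Adj v (ρ v)) h).mpr rfl

theorem exists_toSubgraph_eq {M : G.Subgraph} (hM : M.IsPerfectMatching) :
    ∃ τ : Pairing G, τ.toSubgraph = M := by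
  choose f hf hunique using SimpleGraph.Subgraph.isPerfectMatching_iff.1 hM
  have hinv : Function.Involutive f := fun v => (hunique (f v) v (hf v).symm).symm
  refine ⟨⟨hinv.toPerm f, hinv, fun v => M.adj_sub (hf v)⟩, SimpleGraph.Subgraph.ext ?_ ?_⟩
  · exact (Set.eq_univ_of_forall hM.2).symm
  · ext v w
    exact ⟨by rintro rfl; exact hf v, fun h => (hunique v w h).symm⟩

theorem card_eq_numPerfectMatchings : Nat.card (Pairing G) = numPerfectMatchings G := by
  have hrange : Set.range (toSubgraph (G := G)) = {M | M.IsPerfectMatching} :=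
    Set.ext fun M => ⟨by rintro ⟨τ, rfl⟩; exact τ.isPerfectMatching_toSubgraph,
      exists_toSubgraph_eq⟩
  rw [numPerfectMatchings, ← hrange, ← Nat.card_coe_set_eq,
    Nat.card_range_of_injective toSubgraph_injective]

/-- The permutation following the matching `τ` out of the vertices coloured `true` and the matching
`ρ` out of those coloured `false`. -/
def weave (C : G.Coloring Bool) (τ ρ : Pairing G) : Perm V where
  toFun v := if C v then τ v else ρ v
  invFun v := if C v then ρ v else τ v
  left_inv v := by
    have h₁ := C.valid (τ.adj v)
    have h₂ := C.valid (ρ.adj v)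
    cases h : C v <;> simp_all [apply_apply]
  right_inv v := by
    have h₁ := C.valid (τ.adj v)
    have h₂ := C.valid (ρ.adj v)
    cases h : C v <;> simp_all [apply_apply]

theorem weave_apply (C : G.Coloring Bool) (τ ρ : Pairing G) (v : V) :
    weave C τ ρ v = if C v then τ v else ρ v := rfl

theorem adj_weave (C : G.Coloring Bool) (τ ρ : Pairing G) (v : V) :
    G.Adj v (weave C τ ρ v) := by
  rw [weave_apply]
  split_ifs
  exacts [τ.adj v, ρ.adj v]

theorem inv_weave (C : G.Coloring Bool) (τ ρ : Pairing G) : (weave C τ ρ)⁻¹ = weave C ρ τ := rfl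

/-- The matching formed by the edges `{v, σ v}` with `v` coloured `true`. -/
def ofPerm (C : G.Coloring Bool) (σ : Perm V) (hσ : ∀ v, G.Adj v (σ v)) : Pairing G :=
  have hC (v : V) : C (σ v) = !C v := Bool.eq_not.2 (C.valid (hσ v)).symm
  have hC' (v : V) : C (σ.symm v) = !C v :=
    Bool.eq_not.2 (by simpa only [apply_symm_apply] using C.valid (hσ (σ.symm v)))
  have hinv : Function.Involutive fun v => if C v then σ v else σ.symm v := fun v => by
    cases h : C v <;> simp [h, hC, hC']
  ⟨hinv.toPerm, hinv, fun v => by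
    cases h : C v
    · simpa [h] using (hσ (σ.symm v)).symm
    · simpa [h] using hσ v⟩

theorem adj_inv {σ : Perm V} (hσ : ∀ v, G.Adj v (σ v)) (v : V) : G.Adj v (σ⁻¹ v) := by
  simpa using (hσ (σ⁻¹ v)).symm

/-- A permutation moving every vertex to a neighbour is a pair of matchings woven together. -/
def weaveEquiv (C : G.Coloring Bool) :
    Pairing G × Pairing G ≃ {σ : Perm V // ∀ v, G.Adj v (σ v)} where
  toFun p := ⟨weave C p.1 p.2, adj_weave C p.1 p.2⟩
  invFun σ := (ofPerm C σ.1 σ.2, ofPerm C σ.1⁻¹ (adj_inv σ.2))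
  left_inv p := by
    refine Prod.ext (ext fun v => ?_) (ext fun v => ?_)
    · change (if C v then weave C p.1 p.2 v else weave C p.2 p.1 v) = p.1 v
      cases h : C v <;> simp [weave_apply, h]
    · change (if C v then weave C p.2 p.1 v else weave C p.1 p.2 v) = p.2 v
      cases h : C v <;> simp [weave_apply, h]
  right_inv σ := by
    refine Subtype.ext (Equiv.ext fun v => ?_)
    change (if C v then (if C v then σ.1 v else _) else (if C v then _ else σ.1 v)) = σ.1 v
    cases C v <;> rfl

section Flip

variable [DecidableEq V]

/-- `τ'` arises from `τ` by a flip: the edges `{a, τ a}` and `{c, τ c}` are replaced by the other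
two edges `{a, τ c}` and `{c, τ a}` of a 4-cycle. -/
def IsFlip (τ τ' : Pairing G) : Prop :=
  ∃ a c, a ≠ c ∧ G.Adj a (τ c) ∧ G.Adj c (τ a) ∧ τ'.1 = τ.1 * (swap a c * swap (τ a) (τ c))

theorem exists_isFlip (τ : Pairing G) {a c : V} (hac : a ≠ c) (h₁ : G.Adj a (τ c))
    (h₂ : G.Adj c (τ a)) : ∃ τ', IsFlip τ τ' ∧ τ' a = τ c ∧ τ' c = τ a ∧
      ∀ v, v ≠ a → v ≠ c → v ≠ τ a → v ≠ τ c → τ' v = τ v := by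
  have ha := (τ.adj a).ne
  have hc := (τ.adj c).ne
  have hτ (x y) : τ x = y ↔ x = τ y := τ.2.1.eq_iff
  set σ := τ.1 * (swap a c * swap (τ a) (τ c)) with hσ
  have hσa : σ a = τ c := by simp [hσ, swap_apply_of_ne_of_ne ha h₁.ne]
  have hσc : σ c = τ a := by simp [hσ, swap_apply_of_ne_of_ne h₂.ne hc]
  have hσa' : σ (τ a) = c := by simp [hσ, swap_apply_of_ne_of_ne h₁.ne.symm hc.symm, apply_apply]
  have hσc' : σ (τ c) = a := by simp [hσ, swap_apply_of_ne_of_ne ha.symm h₂.ne.symm, apply_apply]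
  have hσv (v) (hva : v ≠ a) (hvc : v ≠ c) (hva' : v ≠ τ a) (hvc' : v ≠ τ c) : σ v = τ v := by
    simp [σ, swap_apply_of_ne_of_ne, *]
  have key (v) : σ (σ v) = v ∧ G.Adj v (σ v) := by
    by_cases hva : v = a
    · subst hva; exact ⟨by rw [hσa, hσc'], hσa ▸ h₁⟩
    by_cases hvc : v = c
    · subst hvc; exact ⟨by rw [hσc, hσa'], hσc ▸ h₂⟩
    by_cases hva' : v = τ a
    · subst hva'; exact ⟨by rw [hσa', hσc], hσa' ▸ h₂.symm⟩
    by_cases hvc' : v = τ c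
    · subst hvc'; exact ⟨by rw [hσc', hσa], hσc' ▸ h₁.symm⟩
    rw [hσv v hva hvc hva' hvc']
    refine ⟨?_, τ.adj v⟩
    rw [hσv, apply_apply] <;> simpa [hτ, apply_apply]
  exact ⟨⟨σ, fun v => (key v).1, fun v => (key v).2⟩, ⟨a, c, hac, h₁, h₂, rfl⟩, hσa, hσc, hσv⟩

/-- Two matchings are flip-equivalent if a sequence of flips leads from one to the other. -/
abbrev FlipEquiv : Pairing G → Pairing G → Prop := Relation.EqvGen IsFlip

theorem IsFlip.exists_weave_eq {τ τ' : Pairing G} (h : IsFlip τ τ') (C : G.Coloring Bool) :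
    ∃ a c, a ≠ c ∧ C a ∧ C c ∧ G.Adj a (τ c) ∧ G.Adj c (τ a) ∧
      ∀ ρ, weave C τ' ρ = weave C τ ρ * swap a c := by
  obtain ⟨a, c, hCa, hac, h₁, h₂, hτ'⟩ : ∃ a c, C a ∧ a ≠ c ∧ G.Adj a (τ c) ∧ G.Adj c (τ a) ∧
      τ'.1 = τ.1 * (swap a c * swap (τ a) (τ c)) := by
    obtain ⟨a, c, hac, h₁, h₂, hτ'⟩ := h
    cases hCa : C a
    · have hτa : C (τ a) := by simpa [hCa] using C.valid (τ.adj a)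
      have hdisj : Perm.Disjoint (swap a c) (swap (τ a) (τ c)) := Perm.disjoint_swap_swap (by
        simp [hac, h₁.ne, h₂.ne, (τ.adj a).ne, (τ.adj c).ne, τ.1.injective.ne hac])
      refine ⟨τ a, τ c, hτa, τ.1.injective.ne hac, ?_, ?_, ?_⟩ <;>
        simp only [apply_apply, h₁.symm, h₂.symm, hτ', hdisj.commute.eq]
    · exact ⟨a, c, hCa, hac, h₁, h₂, hτ'⟩
  have hCc : C c := by
    have := C.valid h₁
    have := C.valid (τ.adj c)
    cases h : C c <;> simp_all
  have hCτ (v) (hv : C v) : C (τ v) = false := by simpa [hv] using C.valid (τ.adj v)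
  refine ⟨a, c, hac, hCa, hCc, h₁, h₂, fun ρ => Equiv.ext fun v => ?_⟩
  have hτ'v : τ' v = τ (swap a c (swap (τ a) (τ c) v)) := by rw [hτ']; rfl
  rw [Perm.mul_apply, weave_apply, weave_apply, hτ'v]
  cases hv : C v
  · have hva : v ≠ a := by rintro rfl; simp_all
    have hvc : v ≠ c := by rintro rfl; simp_all
    simp [swap_apply_of_ne_of_ne hva hvc, hv]
  · have hva : v ≠ τ a := by rintro rfl; simp_all
    have hvc : v ≠ τ c := by rintro rfl; simp_all
    have hswap : C (swap a c v) := by rw [swap_apply_def]; split_ifs <;> assumption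
    simp [swap_apply_of_ne_of_ne hva hvc, hswap]

end Flip
end Pairing

/-- A Kasteleyn matrix of `G`: a signed adjacency matrix for which the two ways of matching up the
vertices of any 4-cycle contribute opposite signs. -/
structure IsKasteleyn (G : SimpleGraph V) (K : Matrix V V ℝ) : Prop where
  apply_eq_zero : ∀ v w, ¬G.Adj v w → K v w = 0
  abs_apply : ∀ v w, G.Adj v w → |K v w| = 1
  apply_mul_apply : ∀ a b c d, a ≠ c → b ≠ d → G.Adj a b → G.Adj b c → G.Adj c d → G.Adj d a →
    K b a * K d c = -(K d a * K b c)

namespace IsKasteleyn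

theorem transpose {K : Matrix V V ℝ} (hK : IsKasteleyn G K) : IsKasteleyn G K.transpose where
  apply_eq_zero v w h := hK.apply_eq_zero w v fun h' => h h'.symm
  abs_apply v w h := hK.abs_apply w v h.symm
  apply_mul_apply a b c d hac hbd hab hbc hcd hda := by
    have := hK.apply_mul_apply b c d a hbd hac.symm hbc hcd hda hab
    simp only [Matrix.transpose_apply]
    linarith

variable [Fintype V] [DecidableEq V]

/-- The summand of `σ` in the Leibniz expansion of `det K`. -/
def leibnizTerm (K : Matrix V V ℝ) (σ : Perm V) : ℝ := Perm.sign σ * ∏ v, K (σ v) v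

theorem leibnizTerm_inv (K : Matrix V V ℝ) (σ : Perm V) :
    leibnizTerm K σ⁻¹ = leibnizTerm K.transpose σ := by
  rw [leibnizTerm, leibnizTerm, Perm.sign_inv, ← Equiv.prod_comp σ]
  simp

theorem leibnizTerm_mul_swap {K : Matrix V V ℝ} {σ : Perm V} {a c : V} (hac : a ≠ c)
    (h : K (σ a) a * K (σ c) c = -(K (σ c) a * K (σ a) c)) :
    leibnizTerm K (σ * swap a c) = leibnizTerm K σ := by
  have hprod (f : V → ℝ) : ∏ v, f v = f a * f c * ∏ v ∈ (Finset.univ.erase a).erase c, f v := by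
    rw [mul_assoc, Finset.mul_prod_erase _ _ (by simp [hac.symm]),
      Finset.mul_prod_erase _ _ (Finset.mem_univ a)]
  have hrest : ∏ v ∈ (Finset.univ.erase a).erase c, K ((σ * swap a c) v) v =
      ∏ v ∈ (Finset.univ.erase a).erase c, K (σ v) v :=
    Finset.prod_congr rfl fun v hv => by
      simp only [Finset.mem_erase, Finset.mem_univ, and_true] at hv
      rw [Perm.mul_apply, swap_apply_of_ne_of_ne hv.2 hv.1]
  rw [leibnizTerm, leibnizTerm, hprod, hprod, hrest, h, Perm.sign_mul, Perm.sign_swap hac]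
  simp

variable {K : Matrix V V ℝ}

theorem leibnizTerm_eq_zero (hK : IsKasteleyn G K) {σ : Perm V} (hσ : ¬∀ v, G.Adj v (σ v)) :
    leibnizTerm K σ = 0 := by
  obtain ⟨v, hv⟩ := not_forall.1 hσ
  rw [leibnizTerm, Finset.prod_eq_zero (Finset.mem_univ v), mul_zero]
  exact hK.apply_eq_zero _ _ fun h => hv h.symm

theorem abs_leibnizTerm (hK : IsKasteleyn G K) {σ : Perm V} (hσ : ∀ v, G.Adj v (σ v)) :
    |leibnizTerm K σ| = 1 := by
  have hsign : |((Perm.sign σ : ℤ) : ℝ)| = 1 := by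
    rcases Int.units_eq_one_or (Perm.sign σ) with h | h <;> simp [h]
  rw [leibnizTerm, abs_mul, hsign, Finset.abs_prod, one_mul]
  exact Finset.prod_eq_one fun v _ => hK.abs_apply _ _ (hσ v).symm

open Pairing

theorem leibnizTerm_weave_left (hK : IsKasteleyn G K) (C : G.Coloring Bool) {τ τ' : Pairing G}
    (h : FlipEquiv τ τ') (ρ : Pairing G) :
    leibnizTerm K (weave C τ ρ) = leibnizTerm K (weave C τ' ρ) := by
  induction h with
  | rel τ τ' h =>
    obtain ⟨a, c, hac, hCa, hCc, h₁, h₂, hweave⟩ := h.exists_weave_eq C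
    rw [hweave, leibnizTerm_mul_swap hac]
    simp only [weave_apply, hCa, hCc, if_true]
    exact hK.apply_mul_apply a (τ a) c (τ c) hac (τ.1.injective.ne hac) (τ.adj a) h₂.symm
      (τ.adj c) h₁.symm
  | refl => rfl
  | symm _ _ _ ih => exact ih.symm
  | trans _ _ _ _ _ ih₁ ih₂ => exact ih₁.trans ih₂

theorem leibnizTerm_weave_right (hK : IsKasteleyn G K) (C : G.Coloring Bool) (τ : Pairing G)
    {ρ ρ' : Pairing G} (h : FlipEquiv ρ ρ') :
    leibnizTerm K (weave C τ ρ) = leibnizTerm K (weave C τ ρ') := by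
  rw [← inv_weave C ρ, ← inv_weave C ρ', leibnizTerm_inv, leibnizTerm_inv,
    hK.transpose.leibnizTerm_weave_left C h]

theorem det_eq_sum_weave (hK : IsKasteleyn G K) (C : G.Coloring Bool) [Fintype (Pairing G)] :
    K.det = ∑ p : Pairing G × Pairing G, leibnizTerm K (weave C p.1 p.2) := by
  classical
  calc K.det = ∑ σ, leibnizTerm K σ := Matrix.det_apply' K
    _ = ∑ σ with ∀ v, G.Adj v (σ v), leibnizTerm K σ :=
      (Finset.sum_filter_of_ne fun σ _ h => by
        contrapose! h
        exact hK.leibnizTerm_eq_zero (by simpa using h)).symm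
    _ = ∑ σ : {σ : Perm V // ∀ v, G.Adj v (σ v)}, leibnizTerm K σ :=
      Finset.sum_subtype _ (by simp) _
    _ = _ := ((weaveEquiv C).sum_comp fun σ => leibnizTerm K σ).symm

theorem abs_det_eq_sq (hK : IsKasteleyn G K) (C : G.Coloring Bool)
    (hflip : ∀ τ ρ : Pairing G, FlipEquiv τ ρ) :
    |K.det| = (numPerfectMatchings G : ℝ) ^ 2 := by
  have := Fintype.ofFinite (Pairing G)
  rw [hK.det_eq_sum_weave C, ← card_eq_numPerfectMatchings, Nat.card_eq_fintype_card]
  rcases isEmpty_or_nonempty (Pairing G) with _ | ⟨⟨τ₀⟩⟩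
  · simp
  have hconst (p : Pairing G × Pairing G) :
      leibnizTerm K (weave C p.1 p.2) = leibnizTerm K (weave C τ₀ τ₀) :=
    (hK.leibnizTerm_weave_left C (hflip _ _) _).trans
      (hK.leibnizTerm_weave_right C _ (hflip _ _))
  rw [Fintype.sum_congr _ _ hconst, Finset.sum_const, nsmul_eq_mul, abs_mul,
    hK.abs_leibnizTerm (adj_weave C τ₀ τ₀), Finset.card_univ, Fintype.card_prod]
  simp [sq]

end IsKasteleyn
end Kasteleyn

section Determinant

open Matrix

section CommRing

variable {R : Type*} [CommRing R]

open Kronecker in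
theorem det_one_kronecker_add_kronecker_one {ι κ : Type*} [Fintype ι] [DecidableEq ι] [Fintype κ]
    [DecidableEq κ] {A E : Matrix ι ι R} {d : ι → R} (B : Matrix κ κ R) (hE : IsUnit E)
    (hAE : A * E = E * diagonal d) :
    (1 ⊗ₖ B + A ⊗ₖ 1 : Matrix (ι × κ) (ι × κ) R).det = ∏ i, (d i • (1 : Matrix κ κ R) + B).det := by
  have hconj : (1 ⊗ₖ B + A ⊗ₖ 1) * (E ⊗ₖ (1 : Matrix κ κ R)) =
      (E ⊗ₖ (1 : Matrix κ κ R)) * (1 ⊗ₖ B + diagonal d ⊗ₖ 1) := by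
    simp only [add_mul, mul_add, ← mul_kronecker_mul, hAE, one_mul, mul_one]
  have hblock : (1 ⊗ₖ B + diagonal d ⊗ₖ 1 : Matrix (ι × κ) (ι × κ) R) =
      (blockDiagonal fun i => d i • (1 : Matrix κ κ R) + B).submatrix
        (Equiv.prodComm ι κ) (Equiv.prodComm ι κ) := by
    ext ⟨i, j⟩ ⟨i', j'⟩
    by_cases h : i = i' <;> simp [h, one_apply, blockDiagonal_apply, add_comm]
  have hdet : IsUnit (E ⊗ₖ (1 : Matrix κ κ R)).det := by
    simpa [det_kronecker] using ((isUnit_iff_isUnit_det E).1 hE).pow _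
  have := congrArg det hconj
  rw [det_mul, det_mul, mul_comm] at this
  rw [hdet.mul_left_cancel this, hblock, det_submatrix_equiv_self, det_blockDiagonal]

theorem det_of_tridiagonal_corner {n : ℕ} (M : Matrix (Fin (n + 2)) (Fin (n + 2)) R)
    (hrow : ∀ j : Fin n, M 0 j.succ.succ = 0) (hcol : ∀ i : Fin n, M i.succ.succ 0 = 0) :
    M.det = M 0 0 * (M.submatrix Fin.succ Fin.succ).det -
      M 0 1 * M 1 0 * (M.submatrix (Fin.succ ∘ Fin.succ) (Fin.succ ∘ Fin.succ)).det := by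
  have hminor : (M.submatrix Fin.succ (Fin.succAbove 1)).det =
      M 1 0 * (M.submatrix (Fin.succ ∘ Fin.succ) (Fin.succ ∘ Fin.succ)).det := by
    rw [det_succ_column_zero, Fin.sum_univ_succ, Finset.sum_eq_zero]
    · have hskip : Fin.succAbove (1 : Fin (n + 2)) ∘ Fin.succ = Fin.succ ∘ Fin.succ :=
        funext (Fin.succ_succAbove_succ 0)
      simp [← hskip]
    · simp [hcol]
  rw [det_succ_row_zero, Fin.sum_univ_succ, Fin.sum_univ_succ, Finset.sum_eq_zero]
  · simp [hminor, ← mul_assoc, sub_eq_add_neg]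
  · simp [hrow]

/-- The tridiagonal matrix with zero diagonal, `1` above and `s` below it: the adjacency matrix of
a path for `s = 1`, a Kasteleyn matrix of the path for `s = -1`. -/
def pathMatrix (s : R) (n : ℕ) : Matrix (Fin n) (Fin n) R :=
  of fun i j => if i.val + 1 = j.val then 1 else if j.val + 1 = i.val then s else 0

theorem pathMatrix_apply (s : R) (n : ℕ) (i j : Fin n) : pathMatrix s n i j =
    if i.val + 1 = j.val then 1 else if j.val + 1 = i.val then s else 0 := rfl

theorem det_smul_one_add_pathMatrix (s x : R) (n : ℕ) :
    (x • 1 + pathMatrix s (n + 2)).det =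
      x * (x • 1 + pathMatrix s (n + 1)).det - s * (x • 1 + pathMatrix s n).det := by
  have hsub {l : ℕ} : (x • 1 + pathMatrix s (l + 1)).submatrix Fin.succ Fin.succ =
      x • 1 + pathMatrix s l := by
    ext i j
    simp [pathMatrix_apply, one_apply]
  rw [det_of_tridiagonal_corner, ← submatrix_submatrix, hsub, hsub]
  · simp [pathMatrix_apply, one_apply, -smul_add]
  · simp [pathMatrix_apply, one_apply, Fin.ext_iff]
  · simp [pathMatrix_apply, one_apply, Fin.ext_iff]

theorem sum_pathMatrix_mul {s : R} {n : ℕ} {g : ℕ → R} (hzero : g 0 = 0) (hlast : g (n + 1) = 0)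
    (i : Fin n) : ∑ j, pathMatrix s n i j * g (j + 1) = g (i + 2) + s * g i := by
  have hsplit (j : Fin n) : pathMatrix s n i j * g (j + 1) =
      (if i.val + 1 = j then g (j + 1) else 0) + if j.val + 1 = i then s * g (j + 1) else 0 := by
    rw [pathMatrix_apply]
    split_ifs <;> first | omega | simp
  simp only [hsplit, Finset.sum_add_distrib]
  congr 1
  · rw [Fin.sum_univ_eq_sum_range (fun j => if i.val + 1 = j then g (j + 1) else 0),
      Finset.sum_ite_eq]
    split_ifs with h
    · rfl
    · rw [show i.val + 2 = n + 1 by have := i.isLt; simp only [Finset.mem_range] at h; omega, hlast]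
  · obtain hi | ⟨p, hp⟩ : i.val = 0 ∨ ∃ p, i.val = p + 1 := by cases i.val <;> simp
    · simp [hi, hzero]
    · have hpn : p < n := by omega
      simp [hp, Fin.sum_univ_eq_sum_range (fun j => if j = p then s * g (j + 1) else 0), hpn]

end CommRing

theorem det_two_mul_sinh_smul_one_add_pathMatrix (u : ℝ) (k : ℕ) :
    ((2 * sinh u) • 1 + pathMatrix (-1 : ℝ) (2 * k)).det * cosh u = cosh ((2 * k + 1) * u) ∧
    ((2 * sinh u) • 1 + pathMatrix (-1 : ℝ) (2 * k + 1)).det * cosh u = sinh ((2 * k + 2) * u) := by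
  induction k with
  | zero =>
    refine ⟨by simp, ?_⟩
    simp [det_unique, pathMatrix_apply, sinh_two_mul]
  | succ k ih =>
    have hcosh : ((2 * sinh u) • 1 + pathMatrix (-1 : ℝ) (2 * k + 2)).det * cosh u =
        cosh ((2 * k + 3) * u) := by
      rw [det_smul_one_add_pathMatrix, neg_one_mul, sub_neg_eq_add, add_mul, mul_assoc, ih.1, ih.2,
        show (2 * k + 3) * u = (2 * k + 2) * u + u by ring,
        show (2 * k + 1) * u = (2 * k + 2) * u - u by ring, cosh_add, cosh_sub]
      ring
    have hsinh : ((2 * sinh u) • 1 + pathMatrix (-1 : ℝ) (2 * k + 3)).det * cosh u =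
        sinh ((2 * k + 4) * u) := by
      rw [det_smul_one_add_pathMatrix, neg_one_mul, sub_neg_eq_add, add_mul, mul_assoc, hcosh, ih.2,
        show (2 * k + 4) * u = (2 * k + 3) * u + u by ring,
        show (2 * k + 2) * u = (2 * k + 3) * u - u by ring, sinh_add, sinh_sub]
      ring
    rw [show 2 * (k + 1) = 2 * k + 2 by ring, hcosh, hsinh]
    push_cast
    constructor <;> ring_nf

theorem abs_sub_log_two_le_log_cosh (x : ℝ) : |x| - log 2 ≤ log (cosh x) := by
  rw [← cosh_abs, sub_le_iff_le_add, ← log_mul (cosh_pos _).ne' two_ne_zero,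
    le_log_iff_exp_le (by positivity), cosh_eq]
  linarith [exp_pos (-|x|)]

theorem log_cosh_le_abs (x : ℝ) : log (cosh x) ≤ |x| := by
  rw [← cosh_abs, log_le_iff_le_exp (cosh_pos _), cosh_eq]
  linarith [exp_le_exp.2 (neg_le_self (abs_nonneg x))]

theorem det_two_mul_sinh_smul_one_add_pathMatrix_pos (u : ℝ) (k : ℕ) :
    0 < ((2 * sinh u) • 1 + pathMatrix (-1 : ℝ) (2 * k)).det :=
  pos_of_mul_pos_left
    ((det_two_mul_sinh_smul_one_add_pathMatrix u k).1 ▸ cosh_pos _) (cosh_pos u).le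

theorem abs_log_det_sub_le (u : ℝ) (k : ℕ) :
    |log ((2 * sinh u) • 1 + pathMatrix (-1 : ℝ) (2 * k)).det - 2 * k * (|u|)| ≤ log 2 := by
  have hdet := congrArg log (det_two_mul_sinh_smul_one_add_pathMatrix u k).1
  rw [log_mul (det_two_mul_sinh_smul_one_add_pathMatrix_pos u k).ne' (cosh_pos u).ne'] at hdet
  have habs : |(2 * k + 1) * u| = (2 * k + 1) * |u| := by
    rw [abs_mul, abs_of_nonneg (by positivity)]
  have hlower := abs_sub_log_two_le_log_cosh ((2 * k + 1) * u)
  have hupper := log_cosh_le_abs ((2 * k + 1) * u)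
  rw [habs] at hlower hupper
  rw [abs_sub_le_iff]
  constructor <;> linarith [abs_sub_log_two_le_log_cosh u, log_cosh_le_abs u]

/-- The angles `(k + 1)π / (n + 1)` parametrising the spectrum of the path on `n` vertices. -/
noncomputable def pathAngle (n : ℕ) (k : Fin n) : ℝ := (k.val + 1) * (π / (n + 1))

theorem pathAngle_mem_Ioo (n : ℕ) (k : Fin n) : pathAngle n k ∈ Set.Ioo 0 π := by
  have hk : (k.val : ℝ) + 1 < n + 1 := by exact_mod_cast Nat.succ_lt_succ k.isLt
  refine ⟨by unfold pathAngle; positivity, ?_⟩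
  rw [pathAngle, mul_div_left_comm]
  exact mul_lt_of_lt_one_right pi_pos ((div_lt_one (by positivity)).2 hk)

theorem injective_pathAngle (n : ℕ) : Function.Injective (pathAngle n) := by
  intro j k h
  have := mul_right_cancel₀ (by positivity) h
  exact Fin.ext (by exact_mod_cast add_right_cancel this)

theorem injective_two_mul_cos_pathAngle (n : ℕ) :
    Function.Injective fun k => 2 * cos (pathAngle n k) := fun j k h =>
  injective_pathAngle n <| injOn_cos (Set.Ioo_subset_Icc_self (pathAngle_mem_Ioo n j))
    (Set.Ioo_subset_Icc_self (pathAngle_mem_Ioo n k)) (mul_left_cancel₀ two_ne_zero h)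

/-- The matrix whose columns are the sine eigenvectors of the adjacency matrix of a path. -/
noncomputable def pathEigenvectors (n : ℕ) : Matrix (Fin n) (Fin n) ℝ :=
  of fun i k => sin ((i.val + 1) * pathAngle n k)

theorem pathMatrix_mul_pathEigenvectors (n : ℕ) : pathMatrix 1 n * pathEigenvectors n =
    pathEigenvectors n * diagonal fun k => 2 * cos (pathAngle n k) := by
  ext i k
  have hlast : sin ((n + 1 : ℕ) * pathAngle n k) = 0 := by
    rw [pathAngle, mul_left_comm, Nat.cast_succ, mul_div_cancel₀ _ (by positivity),
      ← Nat.cast_succ, sin_nat_mul_pi]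
  have hsum := sum_pathMatrix_mul (s := 1) (g := fun t => sin (t * pathAngle n k))
    (by simp) hlast i
  push_cast at hsum
  rw [mul_diagonal, mul_apply]
  simp only [pathEigenvectors, of_apply]
  rw [hsum, show ((i : ℝ) + 2) * pathAngle n k = (i + 1) * pathAngle n k + pathAngle n k by ring,
    show (i : ℝ) * pathAngle n k = (i + 1) * pathAngle n k - pathAngle n k by ring, sin_add,
    sin_sub]
  ring

theorem hasEigenvector_pathMatrix {n : ℕ} (k : Fin n) :
    Module.End.HasEigenvector (toLin' (pathMatrix 1 n)) (2 * cos (pathAngle n k))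
      ((pathEigenvectors n).col k) := by
  rw [Module.End.hasEigenvector_iff, Module.End.mem_eigenspace_iff]
  constructor
  · ext i
    have := congrFun₂ (pathMatrix_mul_pathEigenvectors n) i k
    rwa [mul_diagonal, mul_apply, mul_comm] at this
  · intro hzero
    have hfirst : sin (pathAngle n k) = 0 := by
      simpa [pathEigenvectors] using congrFun hzero ⟨0, k.pos⟩
    exact (sin_pos_of_mem_Ioo (pathAngle_mem_Ioo n k)).ne' hfirst

theorem isUnit_pathEigenvectors (n : ℕ) : IsUnit (pathEigenvectors n) :=
  linearIndependent_cols_iff_isUnit.1 <| Module.End.eigenvectors_linearIndependent' _ _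
    (injective_two_mul_cos_pathAngle n) _ hasEigenvector_pathMatrix

open Kronecker in
theorem det_one_kronecker_add_pathMatrix_kronecker_one {κ : Type*} [Fintype κ] [DecidableEq κ]
    (n : ℕ) (B : Matrix κ κ ℝ) :
    (1 ⊗ₖ B + pathMatrix 1 n ⊗ₖ 1 : Matrix (Fin n × κ) (Fin n × κ) ℝ).det =
      ∏ k, ((2 * cos (pathAngle n k)) • (1 : Matrix κ κ ℝ) + B).det :=
  det_one_kronecker_add_kronecker_one B (isUnit_pathEigenvectors n)
    (pathMatrix_mul_pathEigenvectors n)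

end Determinant

section Grid

open Pairing

variable {m n : ℕ}

/-- `w` is the right-hand neighbour of `v`. -/
def IsRight (v w : Fin m × Fin n) : Prop := w.1.val = v.1.val ∧ w.2.val = v.2.val + 1

/-- `w` is the neighbour just below `v`; the first coordinate numbers the rows, downwards. -/
def IsBelow (v w : Fin m × Fin n) : Prop := w.1.val = v.1.val + 1 ∧ w.2.val = v.2.val

theorem gridGraph_adj {v w : Fin m × Fin n} :
    (gridGraph m n).Adj v w ↔ IsRight v w ∨ IsRight w v ∨ IsBelow v w ∨ IsBelow w v := by
  rw [gridGraph, SimpleGraph.fromRel_adj, Ne, Prod.ext_iff]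
  simp only [Fin.ext_iff, IsRight, IsBelow]
  omega

theorem prod_fin_ext {v w : Fin m × Fin n} (h₁ : v.1.val = w.1.val) (h₂ : v.2.val = w.2.val) :
    v = w :=
  Prod.ext (Fin.ext h₁) (Fin.ext h₂)

theorem toLex_lt_iff {v w : Fin m × Fin n} :
    toLex v < toLex w ↔ v.1.val < w.1.val ∨ v.1.val = w.1.val ∧ v.2.val < w.2.val := by
  rw [Prod.Lex.toLex_lt_toLex, Fin.lt_def, Fin.ext_iff, Fin.lt_def]

theorem exists_isFlip_right {τ : Pairing (gridGraph m n)} {v r d s : Fin m × Fin n}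
    (hr : IsRight v r) (hd : IsBelow v d) (hs : IsRight d s) (hτv : τ v = d) (hτr : τ r = s) :
    ∃ τ', IsFlip τ τ' ∧ τ' v = r ∧ ∀ w, toLex w < toLex v → τ' w = τ w := by
  have hτs : τ s = r := by rw [← hτr, apply_apply]
  simp only [IsRight, IsBelow] at hr hd hs
  obtain ⟨τ', hflip, hv, -, hrest⟩ := exists_isFlip τ (a := v) (c := s)
    (by rintro rfl; omega) (by rw [hτs, gridGraph_adj]; exact .inl hr)
    (by rw [hτv, gridGraph_adj]; exact .inr (.inl hs))
  rw [hτv, hτs] at hrest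
  refine ⟨τ', hflip, hv.trans hτs, fun w hw => ?_⟩
  rw [toLex_lt_iff] at hw
  apply hrest <;> rintro rfl <;> omega

theorem exists_isFlip_below {τ : Pairing (gridGraph m n)} {v r d s : Fin m × Fin n}
    (hr : IsRight v r) (hd : IsBelow v d) (hs : IsRight d s) (hτv : τ v = r) (hτd : τ d = s) :
    ∃ τ', IsFlip τ τ' ∧ τ' v = d ∧ τ' r = s ∧ ∀ w, toLex w < toLex v → τ' w = τ w := by
  have hτs : τ s = d := by rw [← hτd, apply_apply]
  simp only [IsRight, IsBelow] at hr hd hs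
  have hrs : IsBelow r s := by simp only [IsBelow]; omega
  obtain ⟨τ', hflip, hv, hs', hrest⟩ := exists_isFlip τ (a := v) (c := s)
    (by rintro rfl; omega) (by rw [hτs, gridGraph_adj]; exact .inr (.inr (.inl hd)))
    (by rw [hτv, gridGraph_adj]; exact .inr (.inr (.inr hrs)))
  rw [hτv, hτs] at hrest
  refine ⟨τ', hflip, hv.trans hτs, ?_, fun w hw => ?_⟩
  · rw [← hτv, ← hs', apply_apply]
  · rw [toLex_lt_iff] at hw
    apply hrest <;> rintro rfl <;> omega

/-- By flips that leave all cells before `v` (in reading order) untouched, `τ` can be turned into a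
matching that contains the edge `{v, r}`. -/
def CanMatch (τ : Pairing (gridGraph m n)) (v r : Fin m × Fin n) : Prop :=
  ∃ τ', FlipEquiv τ τ' ∧ τ' v = r ∧ ∀ w, toLex w < toLex v → τ' w = τ w

theorem CanMatch.of_flipEquiv {τ σ : Pairing (gridGraph m n)} {v r : Fin m × Fin n}
    (h : CanMatch σ v r) (hτσ : FlipEquiv τ σ) (hlt : ∀ w, toLex w < toLex v → σ w = τ w) :
    CanMatch τ v r := by
  obtain ⟨σ', hequiv, hv, hσ'⟩ := h
  exact ⟨σ', .trans _ _ _ hτσ hequiv, hv, fun w hw => (hσ' w hw).trans (hlt w hw)⟩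

theorem canMatch_of_isBelow {τ : Pairing (gridGraph m n)} {v r : Fin m × Fin n}
    (hr : IsRight v r) (hv : IsBelow v (τ v)) (hτr : IsBelow r (τ r)) : CanMatch τ v r := by
  have hs : IsRight (τ v) (τ r) := by simp only [IsRight, IsBelow] at *; omega
  obtain ⟨τ', hflip, h⟩ := exists_isFlip_right hr hv hs rfl rfl
  exact ⟨τ', .rel _ _ hflip, h⟩

theorem canMatch_of_isRight {τ : Pairing (gridGraph m n)} {v r s : Fin m × Fin n}
    (hr : IsRight v r) (hv : IsBelow v (τ v)) (hτr : IsRight r (τ r)) (hs : IsBelow r s)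
    (hτs : IsRight s (τ s)) : CanMatch τ v r := by
  have hvr : toLex v < toLex r := by rw [toLex_lt_iff]; simp only [IsRight] at hr; omega
  obtain ⟨σ, hflip, hσr, -, hσ⟩ := exists_isFlip_below hτr hs hτs rfl rfl
  have hσv : σ v = τ v := hσ v hvr
  exact (canMatch_of_isBelow hr (hσv ▸ hv) (hσr ▸ hs)).of_flipEquiv (.rel _ _ hflip)
    fun w hw => hσ w (hw.trans hvr)

theorem not_isRight_apply {τ : Pairing (gridGraph m n)} {x y : Fin m × Fin n} (h : IsRight x y)
    (hne : τ x ≠ y) : ¬IsRight (τ y) y := fun h' =>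
  hne (by rw [← prod_fin_ext (h'.1.symm.trans h.1) (Nat.succ.inj (h'.2.symm.trans h.2)),
    apply_apply])

theorem not_isBelow_apply {τ : Pairing (gridGraph m n)} {x y : Fin m × Fin n} (h : IsBelow x y)
    (hne : τ x ≠ y) : ¬IsBelow (τ y) y := fun h' =>
  hne (by rw [← prod_fin_ext (Nat.succ.inj (h'.1.symm.trans h.1)) (h'.2.symm.trans h.2),
    apply_apply])

-- The flips run up a staircase of dominoes along the diagonal through `v`: the recursion descends
-- this diagonal as long as the matching follows the staircase, at the latest until the bottom row.
theorem canMatch_right {τ : Pairing (gridGraph m n)} {v r : Fin m × Fin n}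
    (hr : IsRight v r) (hv : IsBelow v (τ v)) (hτr : ¬IsBelow (τ r) r) : CanMatch τ v r := by
  induction hk : m - v.1.val using Nat.strong_induction_on generalizing τ v r with
  | _ k ih =>
  rcases gridGraph_adj.1 (τ.adj r) with hright | hleft | hbelow | habove
  · obtain ⟨s, hs₁, hs₂⟩ : ∃ s : Fin m × Fin n, s.1.val = (τ v).1.val ∧ s.2.val = r.2.val :=
      ⟨((τ v).1, r.2), rfl, rfl⟩
    obtain ⟨s', hs'₁, hs'₂⟩ :
        ∃ s' : Fin m × Fin n, s'.1.val = s.1.val ∧ s'.2.val = (τ r).2.val :=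
      ⟨(s.1, (τ r).2), rfl, rfl⟩
    simp only [IsRight, IsBelow] at hr hv hright
    have hrs : IsBelow r s := by simp only [IsBelow]; omega
    have hss' : IsRight s s' := by simp only [IsRight]; omega
    have hrs' : IsBelow (τ r) s' := by simp only [IsBelow]; omega
    have hvs : toLex v < toLex s := by rw [toLex_lt_iff]; omega
    have hrs_lt : toLex r < toLex s := by rw [toLex_lt_iff]; omega
    rcases gridGraph_adj.1 (τ.adj s) with hright' | hleft | hbelow | habove
    · exact canMatch_of_isRight hr hv hright hrs hright'
    · exact absurd hleft (not_isRight_apply (x := τ v) (by simp only [IsRight]; omega)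
        (by rw [apply_apply]; rintro rfl; omega))
    · have hτs' : ¬IsBelow (τ s') s' :=
        not_isBelow_apply hrs' (by rw [apply_apply]; rintro rfl; omega)
      obtain ⟨σ, hequiv, hσs, hσ⟩ := ih (m - s.1.val) (by omega) hss' hbelow hτs' rfl
      have hσv : σ v = τ v := hσ v hvs
      have hσr : σ r = τ r := hσ r hrs_lt
      exact (canMatch_of_isRight hr (hσv ▸ hv) (hσr ▸ hright) hrs (hσs ▸ hss')).of_flipEquiv hequiv
        fun w hw => hσ w (hw.trans hvs)
    · exact absurd habove (not_isBelow_apply hrs (by rintro rfl; omega))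
  · have hvr : τ v ≠ r := fun h => by simp only [IsRight, IsBelow, h] at *; omega
    exact absurd hleft (not_isRight_apply hr hvr)
  · exact canMatch_of_isBelow hr hv hbelow
  · exact absurd habove hτr

theorem flipEquiv_of_forall_canMatch (H : Pairing (gridGraph m n))
    (hH : ∀ τ v, (∀ w, toLex w < toLex v → τ w = H w) → τ v ≠ H v → CanMatch τ v (H v))
    (τ : Pairing (gridGraph m n)) : FlipEquiv τ H := by
  obtain ⟨σ, hτσ, hmax⟩ := exists_maximalFor_of_wellFoundedGT (FlipEquiv τ)
    (fun σ => {v | ∀ w, toLex w ≤ toLex v → σ w = H w}) ⟨τ, .refl τ⟩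
  suffices σ = H from this ▸ hτσ
  by_contra hne
  obtain ⟨v, hv, hmin⟩ := exists_minimalFor_of_wellFoundedLT (fun v => σ v ≠ H v) toLex
    (by contrapose! hne; exact ext hne)
  have hlt (w) (hw : toLex w < toLex v) : σ w = H w :=
    of_not_not fun h => hw.not_ge (hmin h hw.le)
  obtain ⟨σ', hσσ', hσ'v, hσ'⟩ := hH σ v hlt hv
  have hle (w) (hw : toLex w ≤ toLex v) : σ' w = H w := by
    rcases hw.eq_or_lt with h | h
    · rw [toLex.injective h, hσ'v]
    · rw [hσ' w h, hlt w h]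
  exact hv (hmax (.trans _ _ _ hτσ hσσ') (fun u hu w hwu => hle w (hwu.trans
    (le_of_not_gt fun h => hv (hu v h.le)))) hle v le_rfl)

/-- The matching of a board of even width by horizontal dominoes. -/
def horizontal (m k : ℕ) : Pairing (gridGraph m (2 * k)) :=
  let f (v : Fin m × Fin (2 * k)) : Fin m × Fin (2 * k) :=
    (v.1, ⟨if v.2.val % 2 = 0 then v.2.val + 1 else v.2.val - 1, by
      have := v.2.2; split_ifs <;> omega⟩)
  have hf : Function.Involutive f := fun v =>
    prod_fin_ext rfl (by simp only [f]; split_ifs <;> omega)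
  ⟨hf.toPerm, hf, fun v => gridGraph_adj.2 (by
    simp only [Function.Involutive.coe_toPerm, f, IsRight, IsBelow, true_and]
    split_ifs <;> omega)⟩

theorem flipEquiv_horizontal {k : ℕ} (τ : Pairing (gridGraph m (2 * k))) :
    FlipEquiv τ (horizontal m k) := by
  refine flipEquiv_of_forall_canMatch _ (fun τ v hlt hne => ?_) τ
  set H := horizontal m k
  have hrow : (H v).1.val = v.1.val := rfl
  have hHv : ¬toLex (H v) < toLex v := fun h => hne <| by
    rw [← τ.apply_apply (H v), hlt _ h, apply_apply]
  have hH_of_lt (w) (h : toLex (τ w) < toLex v) : H w = τ w := by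
    rw [← H.apply_apply (τ w), ← hlt _ h, apply_apply]
  have hτv : ¬toLex (τ v) < toLex v := fun h => hne (hH_of_lt v h).symm
  rw [toLex_lt_iff] at hHv hτv
  have hr : IsRight v (H v) := by
    have := gridGraph_adj.1 (H.adj v)
    simp only [IsRight, IsBelow] at this ⊢
    omega
  have hbelow : IsBelow v (τ v) := by
    have hcol : (τ v).1.val = v.1.val → (τ v).2.val ≠ v.2.val + 1 := fun h₁ h₂ =>
      hne (prod_fin_ext (h₁.trans hrow.symm) (h₂.trans hr.2.symm))
    have := gridGraph_adj.1 (τ.adj v)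
    simp only [IsRight, IsBelow] at this ⊢
    omega
  refine canMatch_right hr hbelow fun habove => ?_
  have hlt' : toLex (τ (H v)) < toLex v := by
    rw [toLex_lt_iff]
    simp only [IsBelow] at habove
    omega
  have hv : v = τ (H v) := by rw [← hH_of_lt _ hlt', apply_apply]
  exact hlt'.ne (congrArg toLex hv.symm)

/-- The checkerboard colouring. -/
def checkerboard (m n : ℕ) : (gridGraph m n).Coloring Bool :=
  .mk (fun v => decide (Even (v.1.val + v.2.val))) fun {v w} h => by
    rw [gridGraph_adj] at h
    simp only [IsRight, IsBelow] at h
    simp only [ne_eq, decide_eq_decide, Nat.even_iff]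
    omega

open Kronecker in
/-- A signed adjacency matrix of the grid: vertical edges have weight `1`, horizontal edges have
weight `1` when traversed to the right and `-1` when traversed to the left. -/
noncomputable def gridKasteleyn (m n : ℕ) : Matrix (Fin m × Fin n) (Fin m × Fin n) ℝ :=
  1 ⊗ₖ pathMatrix (-1) n + pathMatrix 1 m ⊗ₖ 1

theorem gridKasteleyn_apply (v w : Fin m × Fin n) : gridKasteleyn m n v w =
    (if v.1.val = w.1.val then pathMatrix (-1) n v.2 w.2 else 0) +
      if v.2.val = w.2.val then pathMatrix 1 m v.1 w.1 else 0 := by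
  simp [gridKasteleyn, Matrix.one_apply, Fin.ext_iff]

theorem gridKasteleyn_of_isRight {v w : Fin m × Fin n} (h : IsRight v w) :
    gridKasteleyn m n v w = 1 := by
  rw [gridKasteleyn_apply, if_pos h.1.symm, if_neg (by have := h.2; omega), pathMatrix_apply,
    if_pos h.2.symm, add_zero]

theorem gridKasteleyn_of_isRight_symm {v w : Fin m × Fin n} (h : IsRight w v) :
    gridKasteleyn m n v w = -1 := by
  have := h.2
  rw [gridKasteleyn_apply, if_pos h.1, if_neg (by omega), pathMatrix_apply, if_neg (by omega),
    if_pos h.2.symm, add_zero]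

theorem gridKasteleyn_of_isBelow {v w : Fin m × Fin n} (h : IsBelow v w ∨ IsBelow w v) :
    gridKasteleyn m n v w = 1 := by
  simp only [IsBelow] at h
  rw [gridKasteleyn_apply, if_neg (by omega), if_pos (by omega), pathMatrix_apply, zero_add]
  split_ifs <;> first | rfl | omega

theorem gridKasteleyn_eq_zero {v w : Fin m × Fin n} (h : ¬(gridGraph m n).Adj v w) :
    gridKasteleyn m n v w = 0 := by
  simp only [gridGraph_adj, IsRight, IsBelow] at h
  rw [gridKasteleyn_apply, pathMatrix_apply, pathMatrix_apply]
  split_ifs <;> first | omega | simp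

theorem isRight_of_isRight_of_cycle {a b c d : Fin m × Fin n} (h : IsRight a b) (hac : a ≠ c)
    (hbd : b ≠ d) (hbc : (gridGraph m n).Adj b c) (hcd : (gridGraph m n).Adj c d)
    (hda : (gridGraph m n).Adj d a) :
    IsRight d c ∧ (IsBelow a d ∨ IsBelow d a) ∧ (IsBelow b c ∨ IsBelow c b) := by
  have hac' := mt (fun h : _ ∧ _ => prod_fin_ext h.1 h.2) hac
  have hbd' := mt (fun h : _ ∧ _ => prod_fin_ext h.1 h.2) hbd
  rw [gridGraph_adj] at hbc hcd hda
  clear hac hbd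
  simp only [IsRight, IsBelow] at *
  rcases hda with hda | hda | hda | hda <;> omega

theorem isRight_of_isBelow_of_cycle {a b c d : Fin m × Fin n} (h : IsBelow a b ∨ IsBelow b a)
    (hac : a ≠ c) (hbd : b ≠ d) (hbc : (gridGraph m n).Adj b c) (hcd : (gridGraph m n).Adj c d)
    (hda : (gridGraph m n).Adj d a) : IsRight a d ∨ IsRight d a := by
  have hac' := mt (fun h : _ ∧ _ => prod_fin_ext h.1 h.2) hac
  have hbd' := mt (fun h : _ ∧ _ => prod_fin_ext h.1 h.2) hbd
  rw [gridGraph_adj] at hbc hcd hda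
  clear hac hbd
  simp only [IsRight, IsBelow] at *
  omega

theorem isKasteleyn_gridKasteleyn (m n : ℕ) :
    IsKasteleyn (gridGraph m n) (gridKasteleyn m n) where
  apply_eq_zero _ _ := gridKasteleyn_eq_zero
  abs_apply v w h := by
    rcases gridGraph_adj.1 h with h | h | h
    · simp [gridKasteleyn_of_isRight h]
    · simp [gridKasteleyn_of_isRight_symm h]
    · simp [gridKasteleyn_of_isBelow h]
  apply_mul_apply a b c d hac hbd hab hbc hcd hda := by
    rcases gridGraph_adj.1 hab with h | h | h
    · obtain ⟨hdc, had, hbc⟩ := isRight_of_isRight_of_cycle h hac hbd hbc hcd hda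
      rw [gridKasteleyn_of_isRight_symm h, gridKasteleyn_of_isRight hdc,
        gridKasteleyn_of_isBelow had.symm, gridKasteleyn_of_isBelow hbc]
      norm_num
    · obtain ⟨hcd, hbc, had⟩ :=
        isRight_of_isRight_of_cycle h hbd hac hda.symm hcd.symm hbc.symm
      rw [gridKasteleyn_of_isRight h, gridKasteleyn_of_isRight_symm hcd,
        gridKasteleyn_of_isBelow had.symm, gridKasteleyn_of_isBelow hbc]
      norm_num
    rcases isRight_of_isBelow_of_cycle h hac hbd hbc hcd hda with h' | h'
    · obtain ⟨hbc, hab, hdc⟩ :=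
        isRight_of_isRight_of_cycle h' hac hbd.symm hcd.symm hbc.symm hab.symm
      rw [gridKasteleyn_of_isRight_symm h', gridKasteleyn_of_isRight hbc,
        gridKasteleyn_of_isBelow hab.symm, gridKasteleyn_of_isBelow hdc]
      norm_num
    · obtain ⟨hcb, hdc, hab⟩ := isRight_of_isRight_of_cycle h' hbd.symm hac hab hbc hcd
      rw [gridKasteleyn_of_isRight h', gridKasteleyn_of_isRight_symm hcb,
        gridKasteleyn_of_isBelow hab.symm, gridKasteleyn_of_isBelow hdc]
      norm_num

theorem abs_det_gridKasteleyn (m k : ℕ) : |(gridKasteleyn m (2 * k)).det| =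
    (numPerfectMatchings (gridGraph m (2 * k)) : ℝ) ^ 2 :=
  (isKasteleyn_gridKasteleyn m (2 * k)).abs_det_eq_sq (checkerboard m (2 * k)) fun τ ρ =>
    .trans _ _ _ (flipEquiv_horizontal τ) (.symm _ _ (flipEquiv_horizontal ρ))

end Grid

section Integral

open MeasureTheory

theorem hasSum_arctan_div_self {t : ℝ} (ht₀ : t ≠ 0) (ht₁ : ‖t‖ < 1) :
    HasSum (fun k : ℕ => (-1) ^ k / (2 * k + 1) * t ^ (2 * k)) (arctan t / t) := by
  refine ((hasSum_arctan ht₁).div_const t).congr_fun fun k => ?_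
  push_cast
  field_simp
  ring

theorem integral_pow_two_mul (k : ℕ) : ∫ t in (0 : ℝ)..1, t ^ (2 * k) = 1 / (2 * k + 1) := by
  rw [integral_pow]
  simp

theorem summable_one_div_two_mul_add_one_sq :
    Summable fun k : ℕ => 1 / (2 * k + 1 : ℝ) ^ 2 := by
  simpa [Function.comp_def] using (summable_one_div_nat_pow.2 one_lt_two).comp_injective
    (i := fun k : ℕ => 2 * k + 1) fun j k h => by simpa using h

theorem integral_arctan_div_self : ∫ t in (0 : ℝ)..1, arctan t / t = catalanConstant := by
  have hterm (k : ℕ) : ∫ t in Set.Ioc (0 : ℝ) 1, (-1 : ℝ) ^ k / (2 * k + 1) * t ^ (2 * k) =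
      (-1) ^ k / (2 * k + 1) ^ 2 := by
    rw [← intervalIntegral.integral_of_le zero_le_one, intervalIntegral.integral_const_mul,
      integral_pow_two_mul]
    field_simp
  have hnorm (k : ℕ) : ∫ t in Set.Ioc (0 : ℝ) 1, ‖(-1 : ℝ) ^ k / (2 * k + 1) * t ^ (2 * k)‖ =
      1 / (2 * k + 1) ^ 2 := by
    have habs (t : ℝ) : ‖(-1 : ℝ) ^ k / (2 * k + 1) * t ^ (2 * k)‖ =
        1 / (2 * k + 1) * t ^ (2 * k) := by
      rw [norm_mul, norm_div, norm_pow, norm_neg, norm_one, one_pow, norm_of_nonneg (by positivity),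
        norm_of_nonneg ((even_two_mul k).pow_nonneg t)]
    simp only [habs]
    rw [← intervalIntegral.integral_of_le zero_le_one, intervalIntegral.integral_const_mul,
      integral_pow_two_mul]
    field_simp
  have hsum := hasSum_integral_of_summable_integral_norm
    (fun k : ℕ => Continuous.integrableOn_Ioc (a := 0) (b := 1) (μ := volume)
      (f := fun t : ℝ => (-1 : ℝ) ^ k / (2 * k + 1) * t ^ (2 * k)) (by fun_prop))
    (summable_one_div_two_mul_add_one_sq.congr fun k => (hnorm k).symm)
  simp only [hterm] at hsum
  rw [catalanConstant, hsum.tsum_eq, intervalIntegral.integral_of_le zero_le_one,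
    integral_Ioc_eq_integral_Ioo, integral_Ioc_eq_integral_Ioo]
  refine setIntegral_congr_fun measurableSet_Ioo fun t ht => ?_
  exact (hasSum_arctan_div_self ht.1.ne' (by rw [norm_of_nonneg ht.1.le]; exact ht.2)).tsum_eq.symm

theorem hasDerivAt_arcsin_mul_sin_div_sqrt (t x : ℝ) :
    HasDerivAt (fun x => arcsin (t * sin x / √(1 + t ^ 2)))
      (t * cos x / √(1 + (t * cos x) ^ 2)) x := by
  have hcomplement : 1 - (t * sin x / √(1 + t ^ 2)) ^ 2 =
      (1 + (t * cos x) ^ 2) / (1 + t ^ 2) := by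
    rw [div_pow, sq_sqrt (by positivity), eq_div_iff (by positivity), sub_mul,
      div_mul_cancel₀ _ (by positivity)]
    linear_combination -t ^ 2 * sin_sq_add_cos_sq x
  have hlt : |t * sin x / √(1 + t ^ 2)| < 1 := by
    rw [← sq_lt_one_iff_abs_lt_one, ← sub_pos, hcomplement]
    positivity
  obtain ⟨hlower, hupper⟩ := abs_lt.1 hlt
  refine ((hasDerivAt_arcsin hlower.ne' hupper.ne).comp x
    (((hasDerivAt_sin x).const_mul t).div_const _)).congr_deriv ?_
  rw [hcomplement, sqrt_div (by positivity)]
  field_simp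

theorem continuous_div_sqrt_one_add_sq {X : Type*} [TopologicalSpace X] {f g : X → ℝ}
    (hf : Continuous f) (hg : Continuous g) : Continuous fun x => f x / √(1 + g x ^ 2) :=
  hf.div (by fun_prop) fun x => by positivity

theorem integral_cos_div_sqrt {t : ℝ} (ht : t ≠ 0) :
    ∫ x in (0 : ℝ)..(π / 2), cos x / √(1 + (t * cos x) ^ 2) = arctan t / t := by
  have hderiv (x : ℝ) : HasDerivAt (fun x => arcsin (t * sin x / √(1 + t ^ 2)) / t)
      (cos x / √(1 + (t * cos x) ^ 2)) x :=
    ((hasDerivAt_arcsin_mul_sin_div_sqrt t x).div_const t).congr_deriv (by field_simp)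
  rw [intervalIntegral.integral_eq_sub_of_hasDerivAt fun x _ => hderiv x]
  · simp [arctan_eq_arcsin]
  · exact (continuous_div_sqrt_one_add_sq (by fun_prop) (by fun_prop)).intervalIntegrable _ _

theorem integral_div_sqrt (c : ℝ) : ∫ t in (0 : ℝ)..1, c / √(1 + (t * c) ^ 2) = arsinh c := by
  have hderiv (t : ℝ) : HasDerivAt (fun t => arsinh (t * c)) (c / √(1 + (t * c) ^ 2)) t :=
    ((hasDerivAt_id t).mul_const c).arsinh.congr_deriv (by simp [div_eq_inv_mul])
  rw [intervalIntegral.integral_eq_sub_of_hasDerivAt fun t _ => hderiv t]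
  · simp
  · exact (continuous_div_sqrt_one_add_sq (by fun_prop) (by fun_prop)).intervalIntegrable _ _

theorem integral_arsinh_cos : ∫ x in (0 : ℝ)..(π / 2), arsinh (cos x) = catalanConstant := by
  have hint : IntegrableOn (Function.uncurry fun x t : ℝ => cos x / √(1 + (t * cos x) ^ 2))
      (Set.uIoc 0 (π / 2) ×ˢ Set.uIoc 0 1) (volume.prod volume) :=
    ((continuous_div_sqrt_one_add_sq (by fun_prop) (by fun_prop)).continuousOn.integrableOn_compact
      (isCompact_uIcc.prod isCompact_uIcc)).mono_set
        (Set.prod_mono Set.uIoc_subset_uIcc Set.uIoc_subset_uIcc)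
  simp_rw [← integral_arctan_div_self, ← integral_div_sqrt]
  rw [intervalIntegral_intervalIntegral_swap hint]
  refine intervalIntegral.integral_congr_ae (Eventually.of_forall fun t ht => ?_)
  rw [Set.uIoc_of_le zero_le_one] at ht
  exact integral_cos_div_sqrt ht.1.ne'

theorem integral_abs_arsinh_cos : ∫ x in (0 : ℝ)..π, |arsinh (cos x)| = 2 * catalanConstant := by
  have hint (a b : ℝ) : IntervalIntegrable (fun x => |arsinh (cos x)|) volume a b :=
    (continuous_arsinh.comp continuous_cos).abs.intervalIntegrable a b
  have hfirst : ∫ x in (0 : ℝ)..(π / 2), |arsinh (cos x)| = catalanConstant := by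
    rw [← integral_arsinh_cos]
    refine intervalIntegral.integral_congr fun x hx => abs_of_nonneg (arsinh_nonneg_iff.2 ?_)
    rw [Set.uIcc_of_le (by positivity)] at hx
    exact cos_nonneg_of_mem_Icc ⟨by linarith [hx.1, pi_pos], hx.2⟩
  have hreflect : ∫ x in (π / 2)..π, |arsinh (cos x)| =
      ∫ x in (0 : ℝ)..(π / 2), |arsinh (cos x)| := by
    simpa [cos_pi_sub, sub_half] using (intervalIntegral.integral_comp_sub_left
      (fun x => |arsinh (cos x)|) (a := π / 2) (b := π) π)
  rw [← intervalIntegral.integral_add_adjacent_intervals (hint 0 (π / 2)) (hint _ π), hreflect,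
    hfirst, two_mul]

end Integral

section RiemannSum

open scoped NNReal

theorem abs_mul_sub_integral_le {C : ℝ≥0} {f : ℝ → ℝ} (hf : LipschitzWith C f) (a : ℝ) {h : ℝ}
    (hh : 0 ≤ h) : |h * f a - ∫ x in a..a + h, f x| ≤ C * h ^ 2 := by
  have hconst : h * f a = ∫ _ in a..a + h, f a := by simp
  rw [hconst, ← intervalIntegral.integral_sub intervalIntegrable_const
    (hf.continuous.intervalIntegrable _ _)]
  have hclose (x : ℝ) (hx : x ∈ Set.uIoc a (a + h)) : ‖f a - f x‖ ≤ C * h := by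
    rw [Set.uIoc_of_le (by linarith)] at hx
    refine (hf.dist_le_mul a x).trans (mul_le_mul_of_nonneg_left ?_ C.coe_nonneg)
    rw [dist_comm, Real.dist_eq, abs_of_pos (sub_pos.2 hx.1)]
    linarith [hx.2]
  calc |∫ x in a..a + h, (f a - f x)| ≤ C * h * |a + h - a| :=
        intervalIntegral.norm_integral_le_of_norm_le_const hclose
    _ = C * h ^ 2 := by rw [add_sub_cancel_left, abs_of_nonneg hh]; ring

theorem abs_mul_sum_sub_integral_le {C : ℝ≥0} {f : ℝ → ℝ} (hf : LipschitzWith C f) (a : ℝ) {h : ℝ}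
    (hh : 0 ≤ h) (n : ℕ) :
    |h * ∑ k ∈ Finset.range n, f (a + k * h) - ∫ x in a..a + n * h, f x| ≤ n * (C * h ^ 2) := by
  have hsplit := intervalIntegral.sum_integral_adjacent_intervals (f := f)
    (μ := MeasureTheory.volume) (a := fun k : ℕ => a + k * h) (n := n)
    fun k _ => hf.continuous.intervalIntegrable _ _
  simp only [Nat.cast_zero, zero_mul, add_zero, Nat.cast_succ, add_one_mul, ← add_assoc] at hsplit
  rw [← hsplit, Finset.mul_sum, ← Finset.sum_sub_distrib]
  refine (Finset.abs_sum_le_sum_abs _ _).trans ?_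
  refine (Finset.sum_le_sum fun k _ => abs_mul_sub_integral_le hf _ hh).trans_eq ?_
  simp

theorem tendsto_mul_sum_of_lipschitzWith {C : ℝ≥0} {f : ℝ → ℝ} (hf : LipschitzWith C f) (a : ℝ)
    {L : ℝ} (hL : 0 ≤ L) :
    Tendsto (fun n : ℕ => L / n * ∑ k ∈ Finset.range n, f (a + k * (L / n))) atTop
      (nhds (∫ x in a..a + L, f x)) := by
  rw [tendsto_iff_dist_tendsto_zero]
  refine squeeze_zero' (Eventually.of_forall fun _ => dist_nonneg) ?_
    (tendsto_const_div_atTop_nhds_zero_nat (C * L ^ 2))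
  filter_upwards [eventually_ne_atTop 0] with n hn
  have hbound := abs_mul_sum_sub_integral_le hf a (div_nonneg hL n.cast_nonneg) n
  rw [mul_div_cancel₀ L (Nat.cast_ne_zero.2 hn)] at hbound
  refine hbound.trans_eq ?_
  field_simp

theorem tendsto_sum_pathAngle_div {C : ℝ≥0} {f : ℝ → ℝ} (hf : LipschitzWith C f) :
    Tendsto (fun n : ℕ => (∑ k, f (pathAngle n k)) / n) atTop
      (nhds ((∫ x in (0 : ℝ)..π, f x) / π)) := by
  have hriemann := (tendsto_mul_sum_of_lipschitzWith hf 0 pi_pos.le).comp (tendsto_add_atTop_nat 1)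
  have hendpoint := (tendsto_one_div_add_atTop_nhds_zero_nat (𝕜 := ℝ)).const_mul (f 0)
  have hratio := (tendsto_natCast_div_add_atTop (1 : ℝ)).inv₀ one_ne_zero
  have hlim := ((hriemann.div_const π).sub hendpoint).mul hratio
  simp only [zero_add, mul_zero, sub_zero, inv_one, mul_one] at hlim
  refine hlim.congr' ?_
  filter_upwards [eventually_ne_atTop 0] with n hn
  have hsum : ∑ k ∈ Finset.range (n + 1), f (k * (π / (n + 1))) =
      ∑ k, f (pathAngle n k) + f 0 := by
    rw [Finset.sum_range_succ',
      ← Fin.sum_univ_eq_sum_range fun k => f ((k + 1 : ℕ) * (π / (n + 1)))]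
    simp [pathAngle]
  simp only [Function.comp_apply, Nat.cast_succ, hsum]
  field_simp
  ring

end RiemannSum

section Entropy

theorem lipschitzWith_arsinh : LipschitzWith 1 arsinh := by
  refine lipschitzWith_of_nnnorm_deriv_le differentiable_arsinh fun x => ?_
  rw [(hasDerivAt_arsinh x).deriv, ← NNReal.coe_le_coe, coe_nnnorm, norm_of_nonneg (by positivity)]
  exact inv_le_one_of_one_le₀ (one_le_sqrt.2 (by linarith [sq_nonneg x]))

theorem lipschitzWith_abs_arsinh_cos : LipschitzWith 1 fun x => |arsinh (cos x)| := by
  simpa [Function.comp_def] using lipschitzWith_one_norm.comp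
    (lipschitzWith_arsinh.comp lipschitzWith_cos)

theorem two_mul_log_numPerfectMatchings_gridGraph (m k : ℕ) :
    2 * log (numPerfectMatchings (gridGraph m (2 * k))) =
      ∑ j, log ((2 * cos (pathAngle m j)) • 1 + pathMatrix (-1 : ℝ) (2 * k)).det := by
  have hpos (j : Fin m) :
      0 < ((2 * cos (pathAngle m j)) • 1 + pathMatrix (-1 : ℝ) (2 * k)).det := by
    simpa using det_two_mul_sinh_smul_one_add_pathMatrix_pos (arsinh (cos (pathAngle m j))) k
  have hlog := congrArg log (abs_det_gridKasteleyn m k)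
  rw [gridKasteleyn, det_one_kronecker_add_pathMatrix_kronecker_one, log_abs, log_pow,
    log_prod fun j _ => (hpos j).ne'] at hlog
  exact_mod_cast hlog.symm

theorem abs_two_mul_log_numPerfectMatchings_sub_le (m k : ℕ) :
    |2 * log (numPerfectMatchings (gridGraph m (2 * k))) -
      2 * k * ∑ j, (|arsinh (cos (pathAngle m j))|)| ≤ m * log 2 := by
  rw [two_mul_log_numPerfectMatchings_gridGraph, Finset.mul_sum, ← Finset.sum_sub_distrib]
  refine (Finset.abs_sum_le_sum_abs _ _).trans ?_
  refine (Finset.sum_le_sum fun j _ => (?_ : _ ≤ log 2)).trans_eq (by simp)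
  simpa using abs_log_det_sub_le (arsinh (cos (pathAngle m j))) k

theorem abs_log_numPerfectMatchings_div_sq_sub_le (k : ℕ) :
    |log (numPerfectMatchings (gridGraph (2 * k) (2 * k))) / (2 * k) ^ 2 -
      (∑ j, |arsinh (cos (pathAngle (2 * k) j))|) / (2 * k) / 2| ≤ log 2 / k := by
  obtain rfl | hk := k.eq_zero_or_pos
  · simp
  have hk : (0 : ℝ) < k := Nat.cast_pos.2 hk
  have hbound := abs_two_mul_log_numPerfectMatchings_sub_le (2 * k) k
  set L := log (numPerfectMatchings (gridGraph (2 * k) (2 * k)))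
  set S := ∑ j, |arsinh (cos (pathAngle (2 * k) j))|
  have hfactor : L / (2 * k) ^ 2 - S / (2 * k) / 2 = (2 * L - 2 * k * S) / (8 * k ^ 2) := by
    field_simp
    ring
  rw [hfactor, abs_div, abs_of_pos (by positivity : (0 : ℝ) < 8 * k ^ 2),
    div_le_div_iff₀ (by positivity) hk]
  push_cast at hbound
  nlinarith [log_nonneg one_le_two, mul_le_mul_of_nonneg_right hbound hk.le]

theorem tendsto_sum_abs_arsinh_cos_pathAngle_div :
    Tendsto (fun n : ℕ => (∑ j, |arsinh (cos (pathAngle n j))|) / n) atTop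
      (nhds (2 * catalanConstant / π)) :=
  integral_abs_arsinh_cos ▸ tendsto_sum_pathAngle_div lipschitzWith_abs_arsinh_cos

end Entropy

end DominoTiling

/-- As n → ∞ along even integers (n = 2k), (1/n²) log N(n,n) converges to
G/π, where G is Catalan's constant. -/
theorem entropy_limit_catalan :
    Tendsto (fun k : ℕ =>
        Real.log (numPerfectMatchings (gridGraph (2 * k) (2 * k))) / ((2 * k : ℝ)) ^ 2)
      atTop (nhds (catalanConstant / π)) := by
  have heven : Tendsto (fun k : ℕ => 2 * k) atTop atTop := tendsto_id.const_mul_atTop' two_pos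
  have haverage := (DominoTiling.tendsto_sum_abs_arsinh_cos_pathAngle_div.comp heven).div_const 2
  rw [mul_div_assoc, mul_div_cancel_left₀ _ two_ne_zero] at haverage
  refine tendsto_of_tendsto_of_dist haverage ?_
  refine squeeze_zero (fun _ => dist_nonneg) (fun k => ?_)
    (tendsto_const_div_atTop_nhds_zero_nat (log 2))
  rw [dist_comm, Real.dist_eq]
  exact_mod_cast DominoTiling.abs_log_numPerfectMatchings_div_sq_sub_le k
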